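/- Let (H, f) be an LP-type problem of combinatorial dimension at most d (d ≥ 1), let I be a finite index set with |I| = m, and let π : I → H. Let k ≥ 1 and 1 ≤ r be integers with r < m/2 − k. For each r-element subset R ⊆ I define W_R = { i ∈ I : f(π(R)) < f(π(R) ∪ {π(i)}) }. Then Σ_{R ⊆ I, |R| = r} |W_R|^k ≤ 2 · (k · d · (m − r)/(r + 1))^k · C(m, r); equivalently, the k-th moment of |W_R| over a uniformly random r-element subset R satisfies E[|W_R|^k] ≤ 2 · (k · d · (m − r)/(r + 1))^k. -/

import Mathlib

open Finset

/-!
By the elementary bound `w ^ k ≤ k ^ k * (w.choose k + 1)` it suffices to bound the `k`-th binomial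
moment of the number of violators. That moment counts pairs `R ⊆ Q` with `#Q = r + k` in which
every element of `Q \ R` violates `R`. For a fixed `Q` with basis `B`, the set `Q \ R` must meet
`B`, since otherwise `R` would already have the value of `Q`. Deleting from `Q` one of the at most
`d` elements of `B` and repeating, one sees that at most `d ^ k` sets `R` belong to `Q`. The summand
`1` in the elementary bound is absorbed because `1 ≤ d * (m - r) / (r + 1)`, at the price of the
factor `2`.
-/

section Binomial

theorem pow_mul_descFactorial_le_pow_mul_descFactorial {k w : ℕ} (hkw : k ≤ w) (j : ℕ) :
    w ^ j * k.descFactorial j ≤ k ^ j * w.descFactorial j := by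
  have hfactor (i : ℕ) : w * (k - i) ≤ k * (w - i) := by
    rw [Nat.mul_sub, Nat.mul_sub, mul_comm w k]
    exact Nat.sub_le_sub_left (Nat.mul_le_mul_right i hkw) _
  simp only [Nat.descFactorial_eq_prod_range, pow_eq_prod_const, ← prod_mul_distrib]
  exact prod_le_prod' fun i _ => hfactor i

theorem pow_le_pow_self_mul_choose {k w : ℕ} (hkw : k ≤ w) : w ^ k ≤ k ^ k * w.choose k := by
  refine Nat.le_of_mul_le_mul_right ?_ k.factorial_pos
  calc w ^ k * k.factorial
      ≤ k ^ k * w.descFactorial k := by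
        simpa only [Nat.descFactorial_self] using
          pow_mul_descFactorial_le_pow_mul_descFactorial hkw k
    _ = k ^ k * w.choose k * k.factorial := by
        rw [Nat.descFactorial_eq_factorial_mul_choose]; ring

theorem pow_le_pow_self_mul_choose_add_one (w k : ℕ) : w ^ k ≤ k ^ k * (w.choose k + 1) := by
  rcases le_total k w with hkw | hwk
  · exact (pow_le_pow_self_mul_choose hkw).trans (Nat.mul_le_mul_left _ (Nat.le_succ _))
  · exact (Nat.pow_le_pow_left hwk k).trans (Nat.le_mul_of_pos_right _ (Nat.succ_pos _))

theorem succ_pow_mul_choose_add_le (m r j : ℕ) :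
    (r + 1) ^ j * m.choose (r + j) ≤ (m - r) ^ j * m.choose r := by
  induction j with
  | zero => simp
  | succ j ih =>
    calc (r + 1) ^ (j + 1) * m.choose (r + j + 1)
        ≤ (r + 1) ^ j * (m.choose (r + j + 1) * (r + j + 1)) := by
          rw [pow_succ, mul_assoc, mul_comm (r + 1)]
          gcongr
          omega
      _ = (r + 1) ^ j * m.choose (r + j) * (m - (r + j)) := by
          rw [Nat.choose_succ_right_eq, mul_assoc]
      _ ≤ (m - r) ^ j * m.choose r * (m - r) := by gcongr; omega
      _ = (m - r) ^ (j + 1) * m.choose r := by ring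

end Binomial

section Basis

variable {α ι T : Type*} [Preorder T]

/-- A basis of an LP-type problem: a set all of whose proper subsets have a smaller value. -/
def IsBasis (g : Finset ι → T) (B : Finset ι) : Prop :=
  ∀ B' : Finset ι, B' ⊂ B → g B' < g B

theorem exists_subset_isBasis {g : Finset ι → T} (hg : Monotone g) (Q : Finset ι) :
    ∃ B ⊆ Q, IsBasis g B ∧ g Q ≤ g B := by
  obtain ⟨B, hBQ, hB⟩ := exists_minimal_le_of_wellFoundedLT (fun B => g Q ≤ g B) Q le_rfl
  exact ⟨B, hBQ, fun B' hB' => lt_of_le_not_ge (hg hB'.subset) fun hle =>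
    hB.not_prop_of_lt hB' (hB.prop.trans hle), hB.prop⟩

variable [DecidableEq α] {f : Finset α → T} {π : ι → α} {B : Finset ι}

theorem IsBasis.injOn (hB : IsBasis (fun R => f (R.image π)) B) : Set.InjOn π B := by
  classical
  intro a ha b hb hab
  by_contra hne
  have himage : (B.erase a).image π = B.image π := by
    refine (image_subset_image (erase_subset a B)).antisymm ?_
    rw [← insert_erase (mem_coe.1 ha), image_insert, erase_insert (notMem_erase a B)]
    exact insert_subset (mem_image.2 ⟨b, mem_erase.2 ⟨Ne.symm hne, hb⟩, hab.symm⟩) Subset.rfl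
  have hlt : f ((B.erase a).image π) < f (B.image π) := hB _ (erase_ssubset ha)
  exact (himage ▸ hlt).false

theorem IsBasis.image (hB : IsBasis (fun R => f (R.image π)) B) : IsBasis f (B.image π) := by
  intro C hC
  obtain ⟨D, hDB, rfl⟩ := subset_image_iff.1 hC.subset
  exact hB D ((coe_subset.1 hDB).ssubset_of_ne fun heq => hC.ne (by rw [heq]))

theorem IsBasis.card_le_of_image {d : ℕ} (dim : ∀ B, IsBasis f B → #B ≤ d)
    (hB : IsBasis (fun R => f (R.image π)) B) : #B ≤ d :=
  card_image_of_injOn hB.injOn ▸ dim _ hB.image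

end Basis

section Violators

variable {ι T : Type*} [DecidableEq ι] [Preorder T] [DecidableLT T]

/-- The elements of the ground set `V` whose addition to `R` increases the value, written `W_R` for
the full ground set. -/
def violators (g : Finset ι → T) (V R : Finset ι) : Finset ι :=
  {i ∈ V | g R < g (insert i R)}

theorem mem_violators {g : Finset ι → T} {V R : Finset ι} {i : ι} :
    i ∈ violators g V R ↔ i ∈ V ∧ g R < g (insert i R) :=
  mem_filter

theorem disjoint_violators (g : Finset ι → T) (V R : Finset ι) : Disjoint R (violators g V R) :=
  disjoint_left.2 fun i hiR hi => by
    simpa only [insert_eq_of_mem hiR, lt_self_iff_false] using (mem_violators.1 hi).2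

theorem not_subset_of_nonempty_violators {g : Finset ι → T} (hg : Monotone g) {B Q R : Finset ι}
    (hRQ : R ⊆ Q) (hQB : g Q ≤ g B) (hviol : (violators g Q R).Nonempty) : ¬B ⊆ R := by
  intro hBR
  obtain ⟨i, hi⟩ := hviol
  obtain ⟨hiQ, hlt⟩ := mem_violators.1 hi
  exact hlt.not_ge <| calc
    g (insert i R) ≤ g Q := hg (insert_subset hiQ hRQ)
    _ ≤ g B := hQB
    _ ≤ g R := hg hBR

variable {g : Finset ι → T} {d : ℕ}

theorem card_filter_sdiff_subset_violators_le (hg : Monotone g) (dim : ∀ B, IsBasis g B → #B ≤ d)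
    (r j : ℕ) {Q : Finset ι} (hQ : #Q = r + j) :
    #{R ∈ powersetCard r Q | Q \ R ⊆ violators g Q R} ≤ d ^ j := by
  induction j generalizing Q with
  | zero =>
    refine (card_filter_le _ _).trans ?_
    simp only [card_powersetCard, hQ, add_zero, Nat.choose_self, pow_zero, le_refl]
  | succ j ih =>
    obtain ⟨B, hBQ, hB, hQB⟩ := exists_subset_isBasis hg Q
    have hcover : {R ∈ powersetCard r Q | Q \ R ⊆ violators g Q R} ⊆ B.biUnion fun b =>
        {R ∈ powersetCard r (Q.erase b) | Q.erase b \ R ⊆ violators g (Q.erase b) R} := by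
      intro R hR
      simp only [mem_filter, mem_powersetCard] at hR
      obtain ⟨⟨hRQ, hcard⟩, hviol⟩ := hR
      have hne : (Q \ R).Nonempty := sdiff_nonempty_of_card_lt_card (by omega)
      obtain ⟨b, hbB, hbR⟩ :=
        not_subset.1 (not_subset_of_nonempty_violators hg hRQ hQB (hne.mono hviol))
      simp only [mem_biUnion, mem_filter, mem_powersetCard]
      refine ⟨b, hbB, ⟨subset_erase.2 ⟨hRQ, hbR⟩, hcard⟩, fun i hi => mem_violators.2 ?_⟩
      have hiQR := sdiff_subset_sdiff (erase_subset b Q) Subset.rfl hi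
      exact ⟨(mem_sdiff.1 hi).1, (mem_violators.1 (hviol hiQR)).2⟩
    calc _ ≤ #B * d ^ j := (card_le_card hcover).trans <| card_biUnion_le_card_mul _ _ _
          fun b hb => ih (by rw [card_erase_of_mem (hBQ hb), hQ]; rfl)
      _ ≤ d ^ (j + 1) := pow_succ' d j ▸ Nat.mul_le_mul_right _ (dim B hB)

theorem choose_card_violators_le (g : Finset ι → T) (j : ℕ) {V R : Finset ι} (hRV : R ⊆ V) :
    (#(violators g V R)).choose j
      ≤ #{Q ∈ powersetCard (#R + j) V | R ⊆ Q ∧ Q \ R ⊆ violators g Q R} := by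
  have hdisj {S : Finset ι} (hS : S ∈ powersetCard j (violators g V R)) : Disjoint R S :=
    (disjoint_violators g V R).mono_right (mem_powersetCard.1 hS).1
  rw [← card_powersetCard]
  refine card_le_card_of_injOn (R ∪ ·) (fun S hS => ?_) fun S hS S' hS' hSS' => ?_
  · obtain ⟨hSviol, hcard⟩ := mem_powersetCard.1 hS
    simp only [mem_coe, mem_filter, mem_powersetCard, union_sdiff_cancel_left (hdisj hS)]
    exact ⟨⟨union_subset hRV (hSviol.trans (filter_subset _ _)),
        by rw [card_union_of_disjoint (hdisj hS), hcard]⟩, subset_union_left,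
      fun i hi => mem_violators.2 ⟨mem_union_right R hi, (mem_violators.1 (hSviol hi)).2⟩⟩
  · have hunion : R ∪ S = R ∪ S' := hSS'
    rw [← union_sdiff_cancel_left (hdisj hS), hunion, union_sdiff_cancel_left (hdisj hS')]

theorem sum_choose_card_violators_le (hg : Monotone g) (dim : ∀ B, IsBasis g B → #B ≤ d)
    (V : Finset ι) (r j : ℕ) :
    ∑ R ∈ powersetCard r V, (#(violators g V R)).choose j ≤ (#V).choose (r + j) * d ^ j := by
  calc ∑ R ∈ powersetCard r V, (#(violators g V R)).choose j
      ≤ ∑ R ∈ powersetCard r V, #{Q ∈ powersetCard (r + j) V | R ⊆ Q ∧ Q \ R ⊆ violators g Q R} :=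
        sum_le_sum fun R hR => by
          obtain ⟨hRV, rfl⟩ := mem_powersetCard.1 hR
          exact choose_card_violators_le g j hRV
    _ = ∑ Q ∈ powersetCard (r + j) V, #{R ∈ powersetCard r V | R ⊆ Q ∧ Q \ R ⊆ violators g Q R} :=
        sum_card_bipartiteAbove_eq_sum_card_bipartiteBelow _
    _ ≤ #(powersetCard (r + j) V) • d ^ j := sum_le_card_nsmul _ _ _ fun Q hQ => by
        refine (card_le_card fun R hR => ?_).trans
          (card_filter_sdiff_subset_violators_le hg dim r j (mem_powersetCard.1 hQ).2)
        simp only [mem_filter, mem_powersetCard] at hR ⊢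
        exact ⟨⟨hR.2.1, hR.1.2⟩, hR.2.2⟩
    _ = (#V).choose (r + j) * d ^ j := by rw [card_powersetCard, smul_eq_mul]

theorem sum_card_violators_pow_le (hg : Monotone g) (dim : ∀ B, IsBasis g B → #B ≤ d)
    (V : Finset ι) (k : ℕ) {r : ℕ} (hr : r + 1 ≤ d * (#V - r)) :
    (r + 1) ^ k * ∑ R ∈ powersetCard r V, #(violators g V R) ^ k
      ≤ 2 * (k * d * (#V - r)) ^ k * (#V).choose r := by
  calc (r + 1) ^ k * ∑ R ∈ powersetCard r V, #(violators g V R) ^ k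
      ≤ (r + 1) ^ k * ∑ R ∈ powersetCard r V, k ^ k * ((#(violators g V R)).choose k + 1) := by
        gcongr
        exact pow_le_pow_self_mul_choose_add_one _ _
    _ = (r + 1) ^ k * (k ^ k *
          (∑ R ∈ powersetCard r V, (#(violators g V R)).choose k + (#V).choose r)) := by
        rw [← mul_sum, sum_add_distrib, sum_const, card_powersetCard, smul_eq_mul, mul_one]
    _ ≤ (r + 1) ^ k * (k ^ k * ((#V).choose (r + k) * d ^ k + (#V).choose r)) := by
        gcongr
        exact sum_choose_card_violators_le hg dim V r k
    _ = k ^ k * (d ^ k * ((r + 1) ^ k * (#V).choose (r + k)) + (r + 1) ^ k * (#V).choose r) := by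
        ring
    _ ≤ k ^ k * (d ^ k * ((#V - r) ^ k * (#V).choose r) + (d * (#V - r)) ^ k * (#V).choose r) := by
        gcongr k ^ k * (d ^ k * ?_ + ?_ ^ k * _)
        exact succ_pow_mul_choose_add_le _ _ _
    _ = 2 * (k * d * (#V - r)) ^ k * (#V).choose r := by ring

end Violators

theorem stmt_5_general {α ι T : Type*} [DecidableEq α] [Fintype ι] [Preorder T] [DecidableLT T]
    {f : Finset α → T} (hf : Monotone f) {d : ℕ} (dim : ∀ B, IsBasis f B → #B ≤ d)
    (π : ι → α) (k : ℕ) {r : ℕ} (hr : (r : ℝ) + 1 ≤ d * ((Fintype.card ι : ℝ) - r)) :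
    ∑ R ∈ powersetCard r (univ : Finset ι),
        (#{i | f (R.image π) < f (insert (π i) (R.image π))} : ℝ) ^ k
      ≤ 2 * ((k : ℝ) * d * ((Fintype.card ι : ℝ) - r) / ((r : ℝ) + 1)) ^ k
          * ((Fintype.card ι).choose r : ℝ) := by
  classical
  have hrm : r ≤ Fintype.card ι := by
    have hpos : (0 : ℝ) < d * ((Fintype.card ι : ℝ) - r) := lt_of_lt_of_le (by positivity) hr
    exact_mod_cast sub_nonneg.1 (pos_of_mul_pos_right hpos d.cast_nonneg).le
  have hmoment := sum_card_violators_pow_le (g := fun R : Finset ι => f (R.image π))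
    (fun _ _ hRS => hf (image_subset_image hRS)) (fun _ hB => hB.card_le_of_image dim)
    univ k (r := r) (by rw [card_univ]; rify [hrm]; exact hr)
  simp only [violators, image_insert, card_univ] at hmoment
  rify [hrm] at hmoment
  rw [div_pow, mul_div_assoc', div_mul_eq_mul_div, le_div_iff₀' (by positivity)]
  exact hmoment

/-- Higher-moment sampling lemma (Lemma 9): for any LP-type problem of
dimension at most `d`, any `k ≥ 1` and `1 ≤ r < m/2 - k`, the `k`-th moment of
the violator set size over a uniformly random `r`-element subset satisfies
`E[|W_R|^k] ≤ 2 (k·d·(m-r)/(r+1))^k`, stated here in summed form. -/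
theorem stmt_5 {α ι T : Type*} [DecidableEq α] [Fintype ι] [LinearOrder T]
    (f : Finset α → T)
    (mono : ∀ F G : Finset α, F ⊆ G → f F ≤ f G)
    (locality : ∀ F G : Finset α, F ⊆ G → f F = f G →
      ∀ h : α, f G < f (insert h G) → f F < f (insert h F))
    (d : ℕ) (hd : 1 ≤ d)
    (dim : ∀ B : Finset α, (∀ B' : Finset α, B' ⊂ B → f B' < f B) → B.card ≤ d)
    (m : ℕ) (hm : Fintype.card ι = m)
    (π : ι → α) (k r : ℕ) (hk : 1 ≤ k) (hr : 1 ≤ r)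
    (hrm : (r : ℝ) < (m : ℝ) / 2 - (k : ℝ)) :
    ∑ R ∈ Finset.powersetCard r (Finset.univ : Finset ι),
        (((Finset.univ.filter (fun i : ι =>
          f (R.image π) < f (insert (π i) (R.image π)))).card : ℝ)) ^ k
      ≤ 2 * ((k : ℝ) * d * ((m : ℝ) - r) / ((r : ℝ) + 1)) ^ k
          * (Nat.choose m r : ℝ) := by
  have hk' : (1 : ℝ) ≤ k := Nat.one_le_cast.2 hk
  have hroom : (r : ℝ) + 1 ≤ m - r := by linarith
  subst hm
  exact stmt_5_general (fun F G => mono F G) dim π k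
    (hroom.trans (le_mul_of_one_le_left (by linarith) (Nat.one_le_cast.2 hd)))
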